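/- Let p be a prime and let V be a finite vector space over the field 𝔽_p with |V| ≥ 3. Suppose G₀ is a subgroup of GL(V) acting transitively on the set V ∖ {0} of nonzero vectors. Then there exists a nonidentity element g ∈ G₀ whose action on V is quasi-semiregular with unique fixed point 0; that is, no nonidentity power of g fixes any nonzero vector of V. -/

import Mathlib

/-! Transitivity forces all nonzero vectors to have the same prime order, so `|V| = p ^ n`. A prime
factor `r` of `Φₙ(p)` has a power `q` modulo which `p` has order exactly `n`. Let `P` be a Sylow
`r`-subgroup. As `q` divides `|V| - 1`, the size of the orbit of nonzero vectors, and is coprime to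
the index of `P`, it divides the size of every `P`-orbit of nonzero vectors, hence `|F| - 1` for
every `P`-invariant subgroup `F`. But `|F| = p ^ m` with `m ≤ n`, so `m = 0` or `m = n`: the action
of `P` is irreducible. By Schur's argument no nonidentity element of the center of `P` fixes a
nonzero vector, and this center is nontrivial because `P` is a nontrivial `r`-group. -/

section PrimitivePrimePower

open Polynomial

theorem natCast_pow_eq_one_iff_int_dvd {q b k : ℕ} :
    (b : ZMod q) ^ k = 1 ↔ (q : ℤ) ∣ (b : ℤ) ^ k - 1 := by
  rw [← ZMod.intCast_zmod_eq_zero_iff_dvd]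
  push_cast
  exact sub_eq_zero.symm

theorem natCast_pow_eq_one_iff_dvd_sub_one {q b k : ℕ} (h : 0 < b ^ k) :
    (b : ZMod q) ^ k = 1 ↔ q ∣ b ^ k - 1 := by
  rw [natCast_pow_eq_one_iff_int_dvd, ← Int.natCast_dvd_natCast, Nat.cast_pred h, Nat.cast_pow]

theorem natAbs_cyclotomic_eval_ne_one {b n : ℕ} (h : 3 ≤ b ^ n) :
    ((cyclotomic n ℤ).eval (b : ℤ)).natAbs ≠ 1 := by
  rcases n with _ | _ | n
  · simp at h
  · simp only [zero_add, cyclotomic_one, eval_sub, eval_X, eval_one]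
    simp only [zero_add, pow_one] at h
    omega
  · have hb₀ : b ≠ 0 := by rintro rfl; simp at h
    have hb₁ : b ≠ 1 := by rintro rfl; simp at h
    have := sub_one_lt_natAbs_cyclotomic_eval (n := n + 1 + 1) (by omega) hb₁
    omega

theorem orderOf_natCast_eq_of_dvd_cyclotomic_eval {r b n a : ℕ} {c : ℤ} (hr : r ≠ 0) (hn : 0 < n)
    (hrΦ : (r : ℤ) ∣ (cyclotomic n ℤ).eval (b : ℤ)) (hac : (b : ℤ) ^ n - 1 = (r : ℤ) ^ a * c)
    (hrc : ¬ (r : ℤ) ∣ c) : orderOf (b : ZMod (r ^ a)) = n := by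
  set d := orderOf (b : ZMod (r ^ a))
  have hdn : d ∣ n := orderOf_dvd_of_pow_eq_one <|
    natCast_pow_eq_one_iff_int_dvd.2 ⟨c, by rw [hac, Nat.cast_pow]⟩
  by_contra hd
  have hd_mem : d ∈ n.properDivisors :=
    Nat.mem_properDivisors.2 ⟨hdn, (Nat.le_of_dvd hn hdn).lt_of_ne hd⟩
  have hrd : (r : ℤ) ^ a ∣ (b : ℤ) ^ d - 1 := by
    rw [← Nat.cast_pow]
    exact natCast_pow_eq_one_iff_int_dvd.1 (pow_orderOf_eq_one _)
  have hdΦ : ((b : ℤ) ^ d - 1) * (cyclotomic n ℤ).eval (b : ℤ) ∣ (b : ℤ) ^ n - 1 := by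
    simpa using eval_dvd (x := (b : ℤ))
      (X_pow_sub_one_mul_cyclotomic_dvd_X_pow_sub_one_of_dvd ℤ hd_mem)
  have hra : (r : ℤ) ^ a * r ∣ (r : ℤ) ^ a * c := hac ▸ (mul_dvd_mul hrd hrΦ).trans hdΦ
  exact hrc (Int.dvd_of_mul_dvd_mul_left (pow_ne_zero a (mod_cast hr)) hra)

/-- Unlike in Zsigmondy's theorem the modulus is a prime power, which leaves no exceptional pair
such as `b = 2`, `n = 6` (here `q = 9`). -/
theorem exists_isPrimePow_orderOf_natCast_eq {b n : ℕ} (h : 3 ≤ b ^ n) :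
    ∃ q : ℕ, IsPrimePow q ∧ orderOf (b : ZMod q) = n := by
  have hn : 0 < n := Nat.pos_of_ne_zero (by rintro rfl; simp at h)
  obtain ⟨r, hr, hrΦ⟩ := Nat.exists_prime_and_dvd (natAbs_cyclotomic_eval_ne_one h)
  rw [← Int.natCast_dvd] at hrΦ
  have hΦ : (cyclotomic n ℤ).eval (b : ℤ) ∣ (b : ℤ) ^ n - 1 := by
    simpa using eval_dvd (x := (b : ℤ)) (cyclotomic.dvd_X_pow_sub_one n ℤ)
  have hne : (b : ℤ) ^ n - 1 ≠ 0 := by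
    have : (3 : ℤ) ≤ (b : ℤ) ^ n := mod_cast h
    omega
  obtain ⟨a, c, hrc, hac⟩ :=
    WfDvdMonoid.max_power_factor hne (Nat.prime_iff_prime_int.1 hr).irreducible
  have ha : a ≠ 0 := by
    rintro rfl
    rw [pow_zero, one_mul] at hac
    exact hrc (hac ▸ hrΦ.trans hΦ)
  exact ⟨r ^ a, hr.isPrimePow.pow ha,
    orderOf_natCast_eq_of_dvd_cyclotomic_eval hr.ne_zero hn hrΦ hac hrc⟩

end PrimitivePrimePower

section Orbits

variable {G X : Type*} [Group G] [MulAction G X]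

theorem dvd_ncard_orbit_of_coprime_index {H : Subgroup G} {q : ℕ} (hq : q.Coprime H.index) {x : X}
    (h : q ∣ (MulAction.orbit G x).ncard) : q ∣ (MulAction.orbit H x).ncard := by
  let S := MulAction.stabilizer G x
  have hindex : (S ⊓ H).relIndex S * (MulAction.orbit G x).ncard =
      (MulAction.orbit H x).ncard * H.index := calc
    _ = (S ⊓ H).index := by
      rw [← MulAction.index_stabilizer, Subgroup.relIndex_mul_index inf_le_left]
    _ = S.relIndex H * H.index := by
      rw [← Subgroup.relIndex_mul_index inf_le_right, Subgroup.inf_relIndex_right]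
    _ = (MulAction.orbit H x).ncard * H.index := by
      rw [← MulAction.index_stabilizer]; rfl
  exact hq.dvd_of_dvd_mul_right (hindex ▸ h.mul_left _)

theorem dvd_ncard_of_forall_dvd_ncard_orbit {s : Set X} (hs : s.Finite)
    (hsmul : ∀ (g : G), ∀ x ∈ s, g • x ∈ s) {q : ℕ}
    (h : ∀ x ∈ s, q ∣ (MulAction.orbit G x).ncard) : q ∣ s.ncard := by
  let Y : SubMulAction G X := ⟨s, fun g {x} hx => hsmul g x hx⟩
  have : Finite Y := hs
  have : Fintype (MulAction.orbitRel.Quotient G Y) := Fintype.ofFinite _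
  change q ∣ Nat.card Y
  rw [Nat.card_congr (MulAction.selfEquivSigmaOrbits G Y), Nat.card_sigma]
  refine Finset.dvd_sum fun ω _ => ?_
  have horb := h _ ω.out.2
  rwa [← SubMulAction.val_image_orbit, Set.ncard_image_of_injective _ Subtype.val_injective] at horb

end Orbits

section AdditiveActions

variable {G V : Type*} [Group G] [AddGroup V] [DistribMulAction G V]

theorem ncard_orbit_eq_natCard_sub_one_of_transitive
    (htrans : ∀ v w : V, v ≠ 0 → w ≠ 0 → ∃ g : G, g • v = w) {v : V} (hv : v ≠ 0) :
    (MulAction.orbit G v).ncard = Nat.card V - 1 := by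
  have horbit : MulAction.orbit G v = Set.univ \ {0} := by
    ext w
    simp only [Set.mem_sdiff, Set.mem_univ, Set.mem_singleton_iff, true_and]
    refine ⟨?_, htrans v w hv⟩
    rintro ⟨g, rfl⟩
    exact (smul_ne_zero_iff_ne g).2 hv
  rw [horbit, Set.ncard_sdiff_singleton_of_mem (Set.mem_univ 0), Set.ncard_univ]

theorem isPrimePow_natCard_of_transitive [Finite V] [Nontrivial V]
    (htrans : ∀ v w : V, v ≠ 0 → w ≠ 0 → ∃ g : G, g • v = w) : IsPrimePow (Nat.card V) := by
  have hne_one : Nat.card V ≠ 1 := Finite.one_lt_card.ne'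
  have exists_addOrderOf {r : ℕ} (hr : r.Prime) (hrV : r ∣ Nat.card V) :
      ∃ v : V, v ≠ 0 ∧ addOrderOf v = r := by
    have := Fact.mk hr
    obtain ⟨v, hv⟩ := exists_prime_addOrderOf_dvd_card' r hrV
    exact ⟨v, by rintro rfl; exact hr.ne_one (hv ▸ addOrderOf_zero), hv⟩
  obtain ⟨p, hp, hpV⟩ := Nat.exists_prime_and_dvd hne_one
  obtain ⟨v, hv, rfl⟩ := exists_addOrderOf hp hpV
  have unique_prime {r : ℕ} (hr : r.Prime) (hrV : r ∣ Nat.card V) : r = addOrderOf v := by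
    obtain ⟨w, hw, rfl⟩ := exists_addOrderOf hr hrV
    obtain ⟨g, rfl⟩ := htrans v w hv hw
    exact addOrderOf_injective (DistribSMul.toAddMonoidHom V g) (MulAction.injective g) v
  have hcard := Nat.eq_prime_pow_of_unique_prime_dvd Nat.card_pos.ne' unique_prime
  rw [hcard] at hne_one ⊢
  exact hp.isPrimePow.pow fun h => hne_one (by rw [h, pow_zero])

variable (G V) in
/-- Irreducibility of an action by automorphisms on an additive group, as needed for Schur's
argument: the only invariant subgroups are `⊥` and `⊤`. The action on the trivial group counts as
irreducible. -/
def ActsIrreducibly : Prop :=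
  ∀ F : AddSubgroup V, (∀ (g : G), ∀ v ∈ F, g • v ∈ F) → F = ⊥ ∨ F = ⊤

theorem actsIrreducibly_of_forall_dvd_ncard_orbit [Finite V] {p n q : ℕ} (hp : p.Prime)
    (hV : Nat.card V = p ^ n) (hq : orderOf (p : ZMod q) = n)
    (horb : ∀ v : V, v ≠ 0 → q ∣ (MulAction.orbit G v).ncard) : ActsIrreducibly G V := by
  intro F hF
  have hdvd : q ∣ Nat.card F - 1 := by
    have hcard : ((F : Set V) \ {0}).ncard = Nat.card F - 1 :=
      Set.ncard_sdiff_singleton_of_mem F.zero_mem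
    rw [← hcard]
    refine dvd_ncard_of_forall_dvd_ncard_orbit (G := G) (Set.toFinite _) ?_
      fun v hv => horb v hv.2
    exact fun g v hv => ⟨hF g v hv.1, (smul_ne_zero_iff_ne g).2 hv.2⟩
  obtain ⟨m, hmn, hm⟩ := (Nat.dvd_prime_pow hp).1 (hV ▸ F.card_addSubgroup_dvd_card)
  have hnm : n ∣ m := by
    rw [← hq]
    rw [hm] at hdvd
    exact orderOf_dvd_of_pow_eq_one
      ((natCast_pow_eq_one_iff_dvd_sub_one (pow_pos hp.pos m)).2 hdvd)
  rcases Nat.eq_zero_or_pos m with rfl | hm₀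
  · exact .inl (F.eq_bot_of_card_eq (by rw [hm, pow_zero]))
  · obtain rfl : m = n := hmn.antisymm (Nat.le_of_dvd hm₀ hnm)
    exact .inr (F.eq_top_of_card_eq (hm.trans hV.symm))

theorem ActsIrreducibly.eq_one_of_mem_center_of_smul_eq_self [FaithfulSMul G V]
    (hirr : ActsIrreducibly G V) {z : G} (hz : z ∈ Subgroup.center G)
    {v : V} (hv : v ≠ 0) (hzv : z • v = v) : z = 1 := by
  let F : AddSubgroup V := (DistribSMul.toAddMonoidHom V z).eqLocus (AddMonoidHom.id V)
  have hF : ∀ (g : G), ∀ w ∈ F, g • w ∈ F := by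
    intro g w (hw : z • w = w)
    change z • g • w = g • w
    rw [smul_smul, ← Subgroup.mem_center_iff.1 hz g, ← smul_smul, hw]
  have hvF : v ∈ F := hzv
  rcases hirr F hF with hbot | htop
  · rw [hbot, AddSubgroup.mem_bot] at hvF
    exact absurd hvF hv
  · refine FaithfulSMul.eq_of_smul_eq_smul (α := V) fun w => ?_
    have hw : w ∈ F := htop ▸ AddSubgroup.mem_top w
    exact (show z • w = w from hw).trans (one_smul G w).symm

theorem exists_sylow_nontrivial_actsIrreducibly [Finite G] [Finite V] (hcard : 3 ≤ Nat.card V)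
    (htrans : ∀ v w : V, v ≠ 0 → w ≠ 0 → ∃ g : G, g • v = w) :
    ∃ r : ℕ, r.Prime ∧ ∃ P : Sylow r G, Nontrivial P ∧ ActsIrreducibly P V := by
  have : Nontrivial V := Finite.one_lt_card_iff_nontrivial.1 (by omega)
  obtain ⟨p, n, hp, -, hV⟩ := (isPrimePow_nat_iff _).1 (isPrimePow_natCard_of_transitive htrans)
  obtain ⟨q, hq, hord⟩ := exists_isPrimePow_orderOf_natCast_eq (hV ▸ hcard)
  have hqV : q ∣ Nat.card V - 1 := by
    rw [← hV, ← natCast_pow_eq_one_iff_dvd_sub_one (pow_pos hp.pos n), ← hord]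
    exact pow_orderOf_eq_one _
  obtain ⟨r, a, hr, -, rfl⟩ := (isPrimePow_nat_iff q).1 hq
  have := Fact.mk hr
  let P : Sylow r G := default
  have hindex : (r ^ a).Coprime (P : Subgroup G).index :=
    (hr.coprime_iff_not_dvd.2 P.not_dvd_index).pow_left a
  have horb (v : V) (hv : v ≠ 0) : r ^ a ∣ (MulAction.orbit P v).ncard :=
    dvd_ncard_orbit_of_coprime_index hindex
      (ncard_orbit_eq_natCard_sub_one_of_transitive htrans hv ▸ hqV)
  obtain ⟨v, hv⟩ := exists_ne (0 : V)
  have hdvd : r ^ a ∣ Nat.card P :=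
    (horb v hv).trans (MulAction.index_stabilizer P v ▸ Subgroup.index_dvd_card _)
  exact ⟨r, hr, P,
    Finite.one_lt_card_iff_nontrivial.1 (hq.one_lt.trans_le (Nat.le_of_dvd Nat.card_pos hdvd)),
    actsIrreducibly_of_forall_dvd_ncard_orbit hp hV.symm hord horb⟩

end AdditiveActions

theorem stmt8_general {G V : Type*} [Group G] [AddGroup V] [Finite V] [DistribMulAction G V]
    [FaithfulSMul G V] (hcard : 3 ≤ Nat.card V)
    (htrans : ∀ v w : V, v ≠ 0 → w ≠ 0 → ∃ g : G, g • v = w) :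
    ∃ g : G, g ≠ 1 ∧ ∀ (n : ℤ) (v : V), v ≠ 0 → g ^ n • v = v → g ^ n = 1 := by
  have : Finite G := Finite.of_injective _ (MulAction.toPerm_injective (α := G) (β := V))
  obtain ⟨r, hr, P, _, hirr⟩ := exists_sylow_nontrivial_actsIrreducibly hcard htrans
  have := Fact.mk hr
  have := P.2.center_nontrivial
  obtain ⟨z, hz⟩ := exists_ne (1 : Subgroup.center P)
  refine ⟨z, fun h => hz (Subtype.ext (Subtype.ext h)), fun n v hv hfix => ?_⟩
  exact congrArg Subtype.val (hirr.eq_one_of_mem_center_of_smul_eq_self (z ^ n).2 hv hfix)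

theorem stmt8 {p : ℕ} (hp : p.Prime) {V : Type*} [AddCommGroup V] [Module (ZMod p) V]
    [Finite V] (hcard : 3 ≤ Nat.card V)
    (G₀ : Subgroup (V ≃ₗ[ZMod p] V))
    (htrans : ∀ v w : V, v ≠ 0 → w ≠ 0 → ∃ g ∈ G₀, g v = w) :
    ∃ g ∈ G₀, g ≠ 1 ∧ ∀ (n : ℤ) (v : V), v ≠ 0 → (g ^ n) v = v → g ^ n = 1 := by
  obtain ⟨g, hg, hfix⟩ := stmt8_general (G := G₀) hcard (by simpa [Subgroup.smul_def] using htrans)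
  exact ⟨g, g.2, by simpa using hg, fun n v hv h => congrArg Subtype.val (hfix n v hv h)⟩
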